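/- Let R be a ring, R' an R-algebra (via a ring map R → R'), and M, N finitely presented R-modules such that there exist a module L and short exact sequences 0 → M → L → E → 0 and 0 → N → L → F → 0 with E ⊗_R R' = 0 = Tor₁^R(E, R') and F ⊗_R R' = 0 = Tor₁^R(F, R'). Then M ⊗_R R' ≅ N ⊗_R R' as R'-modules. -/

import Mathlib

open CategoryTheory TensorProduct

/-- `Tor₁^R(M, N)`, as an object of `ModuleCat R`. -/
noncomputable def tor1 (R : Type) [CommRing R] (M N : Type) [AddCommGroup M] [Module R M]
    [AddCommGroup N] [Module R N] : ModuleCat R :=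
  ((Tor (ModuleCat R) 1).obj (ModuleCat.of R M)).obj (ModuleCat.of R N)

/- Fix a projective resolution `P` of `R'`. Vanishing of `Tor₁(E, R')` means that `E ⊗ P` is exact
in degree `1`, so that the syzygy `K = im (P₁ → P₀)` still embeds after tensoring with `E`.
Comparing `0 → K → P₀ → R' → 0` with `0 → M → L → E → 0` and using that `P₀` is flat, one finds
that `R' ⊗ M → R' ⊗ L` is injective; it is surjective because `R' ⊗ E = 0`. Hence both `R' ⊗ M`
and, by the same argument, `R' ⊗ N` are isomorphic to `R' ⊗ L`. -/

universe u

theorem injective_of_exact_comp {R A B C D : Type*} [Ring R] [AddCommGroup A] [Module R A]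
    [AddCommGroup B] [Module R B] [AddCommGroup C] [Module R C] [AddCommGroup D] [Module R D]
    {f : A →ₗ[R] B} {q : B →ₗ[R] C} {j : C →ₗ[R] D} (hqf : q ∘ₗ f = 0)
    (hq : Function.Surjective q) (hex : Function.Exact f (j ∘ₗ q)) : Function.Injective j := by
  rw [injective_iff_map_eq_zero]
  intro c hc
  obtain ⟨b, rfl⟩ := hq c
  obtain ⟨a, rfl⟩ := (hex b).1 hc
  exact LinearMap.congr_fun hqf a

section CommRing

variable {R : Type u} [CommRing R]

theorem lTensor_range_subtype_injective {A B C : Type*} [AddCommGroup A] [Module R A]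
    [AddCommGroup B] [Module R B] [AddCommGroup C] [Module R C] (E : Type*) [AddCommGroup E]
    [Module R E] {f : A →ₗ[R] B} {g : B →ₗ[R] C} (hgf : g ∘ₗ f = 0)
    (hex : Function.Exact (f.lTensor E) (g.lTensor E)) :
    Function.Injective ((LinearMap.range g).subtype.lTensor E) := by
  have hf : g.rangeRestrict ∘ₗ f = 0 :=
    LinearMap.ext fun a ↦ Subtype.ext (LinearMap.congr_fun hgf a)
  refine injective_of_exact_comp (f := f.lTensor E) (q := g.rangeRestrict.lTensor E) ?_
    (LinearMap.lTensor_surjective E g.surjective_rangeRestrict) ?_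
  · rw [← LinearMap.lTensor_comp, hf, LinearMap.lTensor_zero]
  · rwa [← LinearMap.lTensor_comp, LinearMap.rangeRestrict, LinearMap.subtype_comp_codRestrict]

variable {E Q : Type u} [AddCommGroup E] [Module R E] [AddCommGroup Q] [Module R Q]

theorem subsingleton_tor_succ_iff_exact_lTensor (P : ProjectiveResolution (ModuleCat.of R Q))
    (n : ℕ) :
    Subsingleton (((Tor (ModuleCat R) (n + 1)).obj (ModuleCat.of R E)).obj (ModuleCat.of R Q)) ↔
      Function.Exact ((P.complex.d (n + 2) (n + 1)).hom.lTensor E)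
        ((P.complex.d (n + 1) n).hom.lTensor E) := by
  let T := (MonoidalCategory.tensoringLeft (ModuleCat R)).obj (ModuleCat.of R E)
  have e : ((Tor (ModuleCat R) (n + 1)).obj (ModuleCat.of R E)).obj (ModuleCat.of R Q) ≅
      ((T.mapHomologicalComplex _).obj P.complex).homology (n + 1) :=
    P.isoLeftDerivedObj T (n + 1)
  rw [← ModuleCat.isZero_iff_subsingleton, e.isZero_iff,
    ← HomologicalComplex.exactAt_iff_isZero_homology,
    HomologicalComplex.exactAt_iff' _ (n + 2) (n + 1) n (by simp) (by simp),
    ShortComplex.ShortExact.moduleCat_exact_iff_function_exact]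
  rfl

theorem exists_projective_lTensor_ker_subtype_injective
    (hTor : Subsingleton (((Tor (ModuleCat R) 1).obj (ModuleCat.of R E)).obj (ModuleCat.of R Q))) :
    ∃ (P : ModuleCat.{u} R) (π : P →ₗ[R] Q), Module.Projective R P ∧ Function.Surjective π ∧
      Function.Injective ((LinearMap.ker π).subtype.lTensor E) := by
  let P : ProjectiveResolution (ModuleCat.of R Q) := projectiveResolution _
  let d₁ := (P.complex.d 1 0).hom
  let π : P.complex.X 0 →ₗ[R] Q := (P.π.f 0).hom
  have hπ : Function.Surjective π := (ModuleCat.epi_iff_surjective (P.π.f 0)).1 inferInstance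
  have hdπ : Function.Exact d₁ π :=
    (ShortComplex.ShortExact.moduleCat_exact_iff_function_exact _).1 P.exact₀
  have hdd : d₁ ∘ₗ (P.complex.d 2 1).hom = 0 := by
    rw [← ModuleCat.hom_comp, P.complex.d_comp_d, ModuleCat.hom_zero]
  refine ⟨P.complex.X 0, π, (P.complex.X 0).projective_of_module_projective, hπ, ?_⟩
  rw [hdπ.linearMap_ker_eq]
  exact lTensor_range_subtype_injective E hdd
    ((subsingleton_tor_succ_iff_exact_lTensor P 0).1 hTor)

variable {M L : Type*} [AddCommGroup M] [Module R M] [AddCommGroup L] [Module R L]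
  {i : M →ₗ[R] L} {p : L →ₗ[R] E}

theorem lTensor_injective_of_subsingleton_tor_one (hi : Function.Injective i)
    (hp : Function.Surjective p) (hip : Function.Exact i p)
    (hTor : Subsingleton (((Tor (ModuleCat R) 1).obj (ModuleCat.of R E)).obj (ModuleCat.of R Q))) :
    Function.Injective (i.lTensor Q) := by
  obtain ⟨P, π, _, hπ, hker⟩ := exists_projective_lTensor_ker_subtype_injective hTor
  exact lTensor_injective_of_exact_of_exact_of_rTensor_injective
    π.exact_subtype_ker_map hπ hip hp
    (((LinearMap.ker π).subtype.lTensor_inj_iff_rTensor_inj E).1 hker)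
    (Module.Flat.lTensor_preserves_injective_linearMap i hi)

theorem baseChange_bijective_of_subsingleton_tor_one {R' : Type u} [Ring R'] [Algebra R R']
    [Subsingleton (R' ⊗[R] E)] (hi : Function.Injective i) (hp : Function.Surjective p)
    (hip : Function.Exact i p)
    (hTor : Subsingleton
      (((Tor (ModuleCat R) 1).obj (ModuleCat.of R E)).obj (ModuleCat.of R R'))) :
    Function.Bijective (i.baseChange R') :=
  ⟨lTensor_injective_of_subsingleton_tor_one hi hp hip hTor,
    fun x ↦ (lTensor_exact R' hip hp x).1 (Subsingleton.elim _ _)⟩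

end CommRing

theorem stmt6_general {R R' E F : Type u} {M N L : Type*} [CommRing R] [Ring R'] [Algebra R R']
    [AddCommGroup M] [Module R M] [AddCommGroup N] [Module R N] [AddCommGroup L] [Module R L]
    [AddCommGroup E] [Module R E] [AddCommGroup F] [Module R F]
    (iM : M →ₗ[R] L) (pE : L →ₗ[R] E) (hiM : Function.Injective iM)
    (hpE : Function.Surjective pE) (hME : LinearMap.range iM = LinearMap.ker pE)
    (iN : N →ₗ[R] L) (pF : L →ₗ[R] F) (hiN : Function.Injective iN)
    (hpF : Function.Surjective pF) (hNF : LinearMap.range iN = LinearMap.ker pF)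
    (hE0 : Subsingleton (R' ⊗[R] E))
    (hE1 : Subsingleton
      (((Tor (ModuleCat R) 1).obj (ModuleCat.of R E)).obj (ModuleCat.of R R')))
    (hF0 : Subsingleton (R' ⊗[R] F))
    (hF1 : Subsingleton
      (((Tor (ModuleCat R) 1).obj (ModuleCat.of R F)).obj (ModuleCat.of R R'))) :
    Nonempty ((R' ⊗[R] M) ≃ₗ[R'] (R' ⊗[R] N)) := by
  have hM : Function.Bijective (iM.baseChange R') :=
    baseChange_bijective_of_subsingleton_tor_one hiM hpE (LinearMap.exact_iff.2 hME.symm) hE1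
  have hN : Function.Bijective (iN.baseChange R') :=
    baseChange_bijective_of_subsingleton_tor_one hiN hpF (LinearMap.exact_iff.2 hNF.symm) hF1
  exact ⟨(LinearEquiv.ofBijective _ hM).trans (LinearEquiv.ofBijective _ hN).symm⟩

/-- Let `R'` be an `R`-algebra and `M`, `N` finitely presented
`R`-modules admitting short exact sequences `0 → M → L → E → 0`, `0 → N → L → F → 0`
with common middle term, where `E ⊗_R R' = 0 = Tor₁^R(E, R')` and
`F ⊗_R R' = 0 = Tor₁^R(F, R')`.  Then `M ⊗_R R' ≅ N ⊗_R R'` as `R'`-modules. -/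
theorem stmt6 {R R' : Type} [CommRing R] [Ring R'] [Algebra R R']
    {M N L E F : Type} [AddCommGroup M] [Module R M] [AddCommGroup N] [Module R N]
    [AddCommGroup L] [Module R L] [AddCommGroup E] [Module R E] [AddCommGroup F] [Module R F]
    (hM : Module.FinitePresentation R M) (hN : Module.FinitePresentation R N)
    (iM : M →ₗ[R] L) (pE : L →ₗ[R] E)
    (hiM : Function.Injective iM) (hpE : Function.Surjective pE)
    (hME : LinearMap.range iM = LinearMap.ker pE)
    (iN : N →ₗ[R] L) (pF : L →ₗ[R] F)
    (hiN : Function.Injective iN) (hpF : Function.Surjective pF)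
    (hNF : LinearMap.range iN = LinearMap.ker pF)
    (hE0 : Subsingleton (R' ⊗[R] E)) (hE1 : Subsingleton ↥(tor1 R E R'))
    (hF0 : Subsingleton (R' ⊗[R] F)) (hF1 : Subsingleton ↥(tor1 R F R')) :
    Nonempty ((R' ⊗[R] M) ≃ₗ[R'] (R' ⊗[R] N)) :=
  stmt6_general iM pE hiM hpE hME iN pF hiN hpF hNF hE0 hE1 hF0 hF1
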